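/- Let b ≥ 2 and α ≥ 2 be integers and let z = (ζ_1,…,ζ_n,0,0,…) ∈ G with not all of ζ_1,…,ζ_n equal to 0. Then χ_b(Φ_b(z)) = Σ_{v=1}^{α−1} Σ_{0<a_v<⋯<a_1} ∏_{i=1}^{v} b^{−a_i} L(z, a_i+1) + Σ_{0<a_α<⋯<a_1} b^{a_α−1} [Φ_b(z) ∈ H_{a_α−1}] ∏_{i=1}^{α} b^{−a_i} L(z, a_i+1), where the sums are over all strictly increasing tuples of positive integers (of the indicated lengths), [Φ_b(z) ∈ H_a] equals 1 if the first a digits of Φ_b(z) are zero and 0 otherwise, and L(z, i) = b−1 if ζ_i = ζ_1 and L(z, i) = −1 otherwise (with ζ_i = 0 for i > n). -/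

import Mathlib

open scoped Classical

namespace QMC

/-- the `i`-th `b`-adic digit of `k`. -/
def digit (b k i : ℕ) : ℕ := k / b ^ i % b

/-- the `k`-th character `W_k` on `G = (ℤ/bℤ)^ℕ`, where `z i = ζ_{i+1}`. -/
noncomputable def W (b k : ℕ) (z : ℕ → ZMod b) : ℂ :=
  Complex.exp (2 * Real.pi * Complex.I / b) ^
    ∑ i ∈ Finset.range (k + 1), digit b k i * (z i).val

/-- `μ_α(k) = a₁ + ⋯ + a_{min(v,α)}`, the sum of the `α` largest positions (counted
from `1`) of nonzero `b`-adic digits of `k`; `μ_α(0) = 0`. -/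
def mualpha (b α k : ℕ) : ℕ :=
  (((((Finset.range (k + 1)).filter fun i => digit b k i ≠ 0).sort (· ≤ ·)).reverse.take
    α).map (· + 1)).sum

/-- `χ_b(z) = Σ_{k ≥ 1} b^{-μ_α(k)} W_k(z)`. -/
noncomputable def chi (b α : ℕ) (z : ℕ → ZMod b) : ℂ :=
  ∑' k : ℕ, ((b : ℂ) ^ mualpha b α (k + 1))⁻¹ * W b (k + 1) z

/-- the `b`-adic tent transformation `Φ_b : G → G`. -/
def tent (b : ℕ) (z : ℕ → ZMod b) : ℕ → ZMod b := fun i => z (i + 1) - z 0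

/-- `L(z, i) = b - 1` if `ζ_i = ζ_1` and `L(z, i) = -1` otherwise
(here `z j = ζ_{j+1}`). -/
noncomputable def L (b : ℕ) (z : ℕ → ZMod b) (i : ℕ) : ℂ :=
  if z (i - 1) = z 0 then (b : ℂ) - 1 else -1

/-- strictly decreasing `v`-tuples `a_1 > a_2 > ⋯ > a_v > 0` of positive integers
(`a i` is `a_{i+1}`). -/
def DecTuple (v : ℕ) : Type := {a : Fin v → ℕ // StrictAnti a ∧ ∀ i, 0 < a i}

/-! ### Exhaustion of unconditional sums -/

lemma hasSum_exhaust {ι : Type*} (s : ℕ → Finset ι)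
    (hs : Filter.Tendsto s Filter.atTop Filter.atTop) (f : ι → ℂ) (C : ℝ)
    (hC : ∀ m, ∑ i ∈ s m, ‖f i‖ ≤ C) :
    Filter.Tendsto (fun m => ∑ i ∈ s m, f i) Filter.atTop (nhds (∑' i, f i)) := by
  have hsum : Summable f := by
    apply Summable.of_norm
    apply summable_of_sum_le (c := C) (fun i => norm_nonneg _)
    intro u
    obtain ⟨m, hm⟩ := (hs.eventually_ge_atTop u).exists
    exact (Finset.sum_le_sum_of_subset_of_nonneg hm (fun _ _ _ => norm_nonneg _)).trans (hC m)
  exact hsum.hasSum.comp hs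

/-! ### Tuples -/

/-- Strictly decreasing positive tuples with entries at most `m`. -/
noncomputable def D : (v : ℕ) → ℕ → Finset (Fin v → ℕ)
  | 0, _ => {Fin.elim0}
  | _ + 1, 0 => ∅
  | v + 1, m + 1 => D (v + 1) m ∪ (D v m).image (Fin.cons (α := fun _ => ℕ) (m + 1))

lemma mem_D (v m : ℕ) (a : Fin v → ℕ) :
    a ∈ D v m ↔ (StrictAnti a ∧ ∀ i, 0 < a i) ∧ ∀ i, a i ≤ m := by
  induction m generalizing v with
  | zero =>
    cases v with
    | zero =>
      simp only [D, Finset.mem_singleton]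
      constructor
      · rintro -
        exact ⟨⟨fun i => i.elim0, fun i => i.elim0⟩, fun i => i.elim0⟩
      · intro _
        exact Subsingleton.elim _ _
    | succ v =>
      simp only [D, Finset.notMem_empty, false_iff]
      rintro ⟨⟨_, h1⟩, h2⟩
      have := h1 0
      have := h2 0
      omega
  | succ m ih =>
    cases v with
    | zero =>
      simp only [D, Finset.mem_singleton]
      constructor
      · rintro -
        exact ⟨⟨fun i => i.elim0, fun i => i.elim0⟩, fun i => i.elim0⟩
      · intro _
        exact Subsingleton.elim _ _
    | succ v =>
      simp only [D, Finset.mem_union, Finset.mem_image, ih]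
      constructor
      · rintro (⟨⟨h1, h2⟩, h3⟩ | ⟨c, ⟨⟨h1, h2⟩, h3⟩, rfl⟩)
        · exact ⟨⟨h1, h2⟩, fun i => (h3 i).trans (Nat.le_succ m)⟩
        · refine ⟨⟨?_, ?_⟩, ?_⟩
          · intro i j hij
            refine Fin.cases ?_ (fun j hij => ?_) j hij
            · intro h
              exact absurd h (Fin.not_lt_zero _)
            · refine Fin.cases ?_ (fun i hij => ?_) i hij
              · intro _
                simp only [Fin.cons_succ, Fin.cons_zero]
                have := h3 j
                omega
              · simp only [Fin.cons_succ]
                exact h1 (Fin.succ_lt_succ_iff.mp hij)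
          · intro i
            refine Fin.cases ?_ (fun i => ?_) i
            · simp
            · simpa using h2 i
          · intro i
            refine Fin.cases ?_ (fun i => ?_) i
            · simp
            · have := h3 i
              simp only [Fin.cons_succ]
              omega
      · rintro ⟨⟨h1, h2⟩, h3⟩
        by_cases h : a 0 ≤ m
        · left
          exact ⟨⟨h1, h2⟩, fun i => (h1.antitone (Fin.zero_le i)).trans h⟩
        · right
          refine ⟨Fin.tail a, ⟨⟨?_, ?_⟩, ?_⟩, ?_⟩
          · intro i j hij
            exact h1 (Fin.succ_lt_succ_iff.mpr hij)
          · intro i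
            exact h2 _
          · intro i
            have h4 : a i.succ < a 0 := h1 (Fin.succ_pos i)
            have := h3 0
            show a i.succ ≤ m
            omega
          · have h4 : a 0 = m + 1 := by
              have := h3 0
              omega
            rw [← h4]
            exact Fin.cons_self_tail a

lemma sum_D_succ {R : Type*} [AddCommMonoid R] (v m : ℕ) (F : (Fin (v + 1) → ℕ) → R) :
    ∑ a ∈ D (v + 1) (m + 1), F a =
      ∑ a ∈ D (v + 1) m, F a + ∑ a ∈ D v m, F (Fin.cons (α := fun _ => ℕ) (m + 1) a) := by
  have hd : Disjoint (D (v + 1) m) ((D v m).image (Fin.cons (α := fun _ => ℕ) (m + 1))) := by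
    rw [Finset.disjoint_left]
    intro a ha hb
    obtain ⟨c, _, rfl⟩ := Finset.mem_image.mp hb
    have := ((mem_D _ _ _).mp ha).2 0
    simp at this
  rw [D, Finset.sum_union hd, Finset.sum_image]
  intro x _ y _ h
  exact Fin.cons_right_injective (α := fun _ => ℕ) (m + 1) h

/-- elementary sums over bounded tuples -/
noncomputable def T {R : Type*} [CommRing R] (c : ℕ → R) (v m : ℕ) : R :=
  ∑ a ∈ D v m, ∏ i, c (a i)

/-- weighted elementary sums over bounded tuples -/
noncomputable def U {R : Type*} [CommRing R] (g c : ℕ → R) (w m : ℕ) : R :=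
  ∑ a ∈ D (w + 1) m, g (a (Fin.last w)) * ∏ i, c (a i)

section rec
variable {R : Type*} [CommRing R] (g c : ℕ → R)

lemma T_zero (m : ℕ) : T c 0 m = 1 := by
  cases m <;> simp [T, D]

lemma T_succ_zero (v : ℕ) : T c (v + 1) 0 = 0 := by
  simp [T, D]

lemma T_succ_succ (v m : ℕ) : T c (v + 1) (m + 1) = T c (v + 1) m + c (m + 1) * T c v m := by
  simp only [T]
  rw [sum_D_succ, Finset.mul_sum]
  simp [Fin.prod_univ_succ]

lemma U_zero (w : ℕ) : U g c w 0 = 0 := by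
  simp [U, D]

lemma U_zero_succ (m : ℕ) : U g c 0 (m + 1) = U g c 0 m + c (m + 1) * g (m + 1) := by
  simp only [U]
  rw [sum_D_succ]
  congr 1
  cases m <;> simp [D, mul_comm]

lemma U_succ_succ (w m : ℕ) : U g c (w + 1) (m + 1) = U g c (w + 1) m + c (m + 1) * U g c w m := by
  simp only [U]
  rw [sum_D_succ, Finset.mul_sum]
  congr 1
  apply Finset.sum_congr rfl
  intro a _
  rw [Fin.prod_univ_succ, ← Fin.succ_last]
  simp only [Fin.cons_zero, Fin.cons_succ]
  ring

/-- The recursion determines `S`. -/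
lemma eq_of_rec (S : ℕ → ℕ → R) (h0 : ∀ m, S 0 m = g (m + 1)) (h1 : ∀ w, S (w + 1) 0 = 1)
    (h2 : ∀ w m, S (w + 1) (m + 1) = S (w + 1) m + c (m + 1) * S w m) (w m : ℕ) :
    S (w + 1) m = ∑ v ∈ Finset.range (w + 1), T c v m + U g c w m := by
  induction m generalizing w with
  | zero =>
    rw [h1, U_zero, Finset.sum_range_succ']
    simp [T_zero, T_succ_zero]
  | succ m ih =>
    cases w with
    | zero =>
      rw [h2, ih, h0, U_zero_succ]
      simp [T_zero]
      ring
    | succ w =>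
      rw [h2, ih, ih, U_succ_succ, Finset.sum_range_succ', Finset.sum_range_succ' _ (w + 1)]
      simp only [T_succ_succ, T_zero, Finset.sum_add_distrib, ← Finset.mul_sum]
      ring

end rec

/-! ### Bounds -/

lemma bound_rec (X Y c : ℕ → ℝ) (hX : ∀ m, X (m + 1) = X m + c (m + 1) * Y m)
    (hc : ∀ m, c (m + 1) ≤ (1 / 2) ^ m) (hY0 : ∀ m, 0 ≤ Y m)
    (hY : ∃ A, 0 ≤ A ∧ ∀ m, Y m ≤ A * (1 + m)) : ∃ B, 0 ≤ B ∧ ∀ m, X m ≤ B := by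
  obtain ⟨A, hA0, hA⟩ := hY
  have hs : Summable (fun i : ℕ => (1 + (i : ℝ)) * (1 / 2 : ℝ) ^ i) := by
    have h1 := summable_pow_mul_geometric_of_norm_lt_one (R := ℝ) 1 (r := 1 / 2) (by norm_num)
    have h0 := summable_pow_mul_geometric_of_norm_lt_one (R := ℝ) 0 (r := 1 / 2) (by norm_num)
    refine (h0.add h1).congr ?_
    intro i
    ring
  have key : ∀ m, X m ≤ X 0 + A * ∑ i ∈ Finset.range m, (1 + (i : ℝ)) * (1 / 2 : ℝ) ^ i := by
    intro m
    induction m with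
    | zero => simp
    | succ m ih =>
      rw [hX, Finset.sum_range_succ, mul_add]
      have : c (m + 1) * Y m ≤ (1 / 2) ^ m * (A * (1 + m)) :=
        mul_le_mul (hc m) (hA m) (hY0 m) (by positivity)
      nlinarith
  refine ⟨|X 0| + A * ∑' i : ℕ, (1 + (i : ℝ)) * (1 / 2 : ℝ) ^ i, ?_, ?_⟩
  · have : 0 ≤ ∑' i : ℕ, (1 + (i : ℝ)) * (1 / 2 : ℝ) ^ i := tsum_nonneg (fun i => by positivity)
    positivity
  · intro m
    refine (key m).trans (add_le_add (le_abs_self _) (mul_le_mul_of_nonneg_left ?_ hA0))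
    exact hs.sum_le_tsum _ (fun i _ => by positivity)

lemma linear_of_bounded (X : ℕ → ℝ) (h : ∃ B, 0 ≤ B ∧ ∀ m, X m ≤ B) :
    ∃ A, 0 ≤ A ∧ ∀ m : ℕ, X m ≤ A * (1 + m) := by
  obtain ⟨B, h0, hB⟩ := h
  refine ⟨B, h0, fun m => (hB m).trans ?_⟩
  have : (0 : ℝ) ≤ m := Nat.cast_nonneg m
  nlinarith [mul_nonneg h0 this]

lemma linear_of_step (X : ℕ → ℝ) (h : ∀ m, X (m + 1) ≤ X m + 1) (h0 : X 0 ≤ 1) :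
    ∃ A, 0 ≤ A ∧ ∀ m : ℕ, X m ≤ A * (1 + m) := by
  refine ⟨1, zero_le_one, fun m => ?_⟩
  induction m with
  | zero => simpa using h0
  | succ m ih =>
    have := h m
    push_cast
    linarith

lemma T_nonneg (c : ℕ → ℝ) (hc : ∀ m, 0 ≤ c m) (v m : ℕ) : 0 ≤ T c v m :=
  Finset.sum_nonneg fun _ _ => Finset.prod_nonneg fun _ _ => hc _

lemma U_nonneg (g c : ℕ → ℝ) (hc : ∀ m, 0 ≤ c m) (hg : ∀ m, 0 ≤ g m) (v m : ℕ) :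
    0 ≤ U g c v m :=
  Finset.sum_nonneg fun _ _ => mul_nonneg (hg _) (Finset.prod_nonneg fun _ _ => hc _)

lemma T_bounded (c : ℕ → ℝ) (hc0 : ∀ m, 0 ≤ c m) (hc : ∀ m, c (m + 1) ≤ (1 / 2) ^ m) (v : ℕ) :
    ∃ B, 0 ≤ B ∧ ∀ m, T c v m ≤ B := by
  induction v with
  | zero => exact ⟨1, zero_le_one, fun m => (T_zero c m).le⟩
  | succ v ih =>
    exact bound_rec _ _ c (T_succ_succ c v) hc (T_nonneg c hc0 v) (linear_of_bounded _ ih)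

lemma U_bounded (g c : ℕ → ℝ) (hc0 : ∀ m, 0 ≤ c m) (hc : ∀ m, c (m + 1) ≤ (1 / 2) ^ m)
    (hg0 : ∀ m, 0 ≤ g m) (hgc : ∀ m, c (m + 1) * g (m + 1) ≤ 1) (w : ℕ) :
    ∃ B, 0 ≤ B ∧ ∀ m, U g c (w + 1) m ≤ B := by
  induction w with
  | zero =>
    refine bound_rec _ _ c (U_succ_succ g c 0) hc (U_nonneg g c hc0 hg0 0) ?_
    apply linear_of_step
    · intro m
      rw [U_zero_succ]
      linarith [hgc m]
    · rw [U_zero]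
      exact zero_le_one
  | succ w ih =>
    exact bound_rec _ _ c (U_succ_succ g c (w + 1)) hc (U_nonneg g c hc0 hg0 _)
      (linear_of_bounded _ ih)

/-! ### Digits -/

lemma digit_zero_of_lt {b k i : ℕ} (h : k < b ^ i) : digit b k i = 0 := by
  simp [digit, Nat.div_eq_of_lt h]

lemma lt_of_digit_ne {b k i : ℕ} (hb : 2 ≤ b) (h : digit b k i ≠ 0) : i < k + 1 := by
  by_contra hlt
  apply h
  apply digit_zero_of_lt
  have : i < b ^ i := Nat.lt_pow_self (by omega)
  omega

lemma digit_top {b m κ k : ℕ} (hb : 2 ≤ b) (hκ : κ < b) (hk : k < b ^ m) :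
    digit b (κ * b ^ m + k) m = κ := by
  have hpos : 0 < b ^ m := by positivity
  unfold digit
  rw [add_comm, Nat.add_mul_div_right _ _ hpos, Nat.div_eq_of_lt hk, zero_add,
    Nat.mod_eq_of_lt hκ]

lemma digit_low {b m κ k i : ℕ} (hb : 2 ≤ b) (hi : i < m) :
    digit b (κ * b ^ m + k) i = digit b k i := by
  have hpos : 0 < b ^ i := by positivity
  obtain ⟨d, rfl⟩ : ∃ d, m = i + (d + 1) := ⟨m - i - 1, by omega⟩
  unfold digit
  have : κ * b ^ (i + (d + 1)) + k = k + (κ * b ^ d * b) * b ^ i := by ring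
  rw [this, Nat.add_mul_div_right _ _ hpos, Nat.add_mul_mod_self_right]

lemma lt_pow_succ {b m κ k : ℕ} (hκ : κ < b) (hk : k < b ^ m) :
    κ * b ^ m + k < b ^ (m + 1) := by
  calc κ * b ^ m + k < κ * b ^ m + b ^ m := by omega
    _ = (κ + 1) * b ^ m := by ring
    _ ≤ b * b ^ m := Nat.mul_le_mul_right _ hκ
    _ = b ^ (m + 1) := by ring

lemma mualpha_alpha_zero (b k : ℕ) : mualpha b 0 k = 0 := by
  simp [mualpha]

lemma mualpha_zero (b α : ℕ) : mualpha b α 0 = 0 := by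
  have : ((Finset.range (0 + 1)).filter fun i => digit b 0 i ≠ 0) = ∅ := by
    ext i
    simp [digit]
  unfold mualpha
  rw [this]
  simp

lemma mualpha_succ {b m κ k : ℕ} (α : ℕ) (hb : 2 ≤ b) (hκ : κ < b) (hκ0 : κ ≠ 0)
    (hk : k < b ^ m) :
    mualpha b (α + 1) (κ * b ^ m + k) = (m + 1) + mualpha b α k := by
  have hset : ((Finset.range (κ * b ^ m + k + 1)).filter fun i => digit b (κ * b ^ m + k) i ≠ 0)
      = insert m ((Finset.range (k + 1)).filter fun i => digit b k i ≠ 0) := by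
    ext i
    simp only [Finset.mem_filter, Finset.mem_insert, Finset.mem_range]
    rcases lt_trichotomy i m with h | h | h
    · rw [digit_low hb h]
      constructor
      · rintro ⟨_, h2⟩
        exact Or.inr ⟨lt_of_digit_ne hb h2, h2⟩
      · rintro (h2 | ⟨h1, h2⟩)
        · omega
        · exact ⟨by omega, h2⟩
    · subst h
      have h3 := digit_top hb hκ hk
      refine ⟨fun _ => Or.inl rfl, fun _ => ?_⟩
      have h4 : digit b (κ * b ^ i + k) i ≠ 0 := by rwa [h3]
      exact ⟨lt_of_digit_ne hb h4, h4⟩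
    · have hp : b ^ (m + 1) ≤ b ^ i := Nat.pow_le_pow_right (by omega) h
      have hp' : b ^ m ≤ b ^ i := Nat.pow_le_pow_right (by omega) h.le
      rw [digit_zero_of_lt ((lt_pow_succ hκ hk).trans_le hp), digit_zero_of_lt (hk.trans_le hp')]
      simp
      omega
  have hlt : ∀ x ∈ ((Finset.range (k + 1)).filter fun i => digit b k i ≠ 0), x < m := by
    intro x hx
    by_contra h
    apply (Finset.mem_filter.mp hx).2
    exact digit_zero_of_lt (hk.trans_le (Nat.pow_le_pow_right (by omega) (by omega)))
  unfold mualpha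
  rw [hset]
  generalize ((Finset.range (k + 1)).filter fun i => digit b k i ≠ 0) = s at hlt
  have hsort : (insert m s).sort (· ≤ ·) = s.sort (· ≤ ·) ++ [m] := by
    apply List.Perm.eq_of_pairwise (le := (· ≤ ·))
    · intro a c _ _ h1 h2
      exact le_antisymm h1 h2
    · exact Finset.pairwise_sort _ _
    · rw [List.pairwise_append]
      refine ⟨Finset.pairwise_sort _ _, by simp, ?_⟩
      intro a ha c hc
      simp at ha hc
      subst hc
      exact (hlt a ha).le
    · rw [List.perm_ext_iff_of_nodup]
      · intro a
        simp [or_comm]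
      · exact Finset.sort_nodup _ _
      · rw [List.nodup_append]
        refine ⟨Finset.sort_nodup _ _, by simp, ?_⟩
        intro a ha c hc
        simp at ha hc
        subst hc
        exact (hlt a ha).ne
  rw [hsort]
  simp

lemma sum_range_mul' {R : Type*} [AddCommMonoid R] (f : ℕ → R) (n M : ℕ) :
    ∑ k ∈ Finset.range (n * M), f k =
      ∑ κ ∈ Finset.range n, ∑ k ∈ Finset.range M, f (κ * M + k) := by
  induction n with
  | zero => simp
  | succ n ih => rw [Nat.succ_mul, Finset.sum_range_add, ih, Finset.sum_range_succ]

/-! ### The sums `S` -/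

/-- Partial sums of the character series. -/
noncomputable def S {R : Type*} [Field R] (b : ℕ) (ψ : ℕ → R) (α m : ℕ) : R :=
  ∑ k ∈ Finset.range (b ^ m), ((b : R) ^ mualpha b α k)⁻¹ * ψ k

section S
variable {R : Type*} [Field R] {b : ℕ} (hb : 2 ≤ b) (ψ : ℕ → R) (φ : ℕ → ℕ → R)

lemma S_m_zero (hψ0 : ψ 0 = 1) (α : ℕ) : S b ψ α 0 = 1 := by
  simp [S, mualpha_zero, hψ0]

lemma S_split (m : ℕ) (f : ℕ → R) (hb : 2 ≤ b) :
    ∑ k ∈ Finset.range (b ^ (m + 1)), f k = ∑ k ∈ Finset.range (b ^ m), f k +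
      ∑ κ ∈ Finset.Ico 1 b, ∑ k ∈ Finset.range (b ^ m), f (κ * b ^ m + k) := by
  rw [pow_succ', sum_range_mul', Finset.range_eq_Ico, Finset.sum_eq_sum_Ico_succ_bot (by omega)]
  simp

lemma S_succ (hb : 2 ≤ b) (h : ∀ m κ k, κ < b → k < b ^ m → ψ (κ * b ^ m + k) = φ m κ * ψ k)
    (α m : ℕ) :
    S b ψ (α + 1) (m + 1) = S b ψ (α + 1) m +
      (((b : R) ^ (m + 1))⁻¹ * ∑ κ ∈ Finset.Ico 1 b, φ m κ) * S b ψ α m := by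
  unfold S
  rw [S_split m _ hb]
  congr 1
  rw [mul_assoc, Finset.sum_mul, Finset.mul_sum]
  apply Finset.sum_congr rfl
  intro κ hκ
  rw [Finset.mem_Ico] at hκ
  rw [Finset.mul_sum, Finset.mul_sum]
  apply Finset.sum_congr rfl
  intro k hk
  rw [Finset.mem_range] at hk
  rw [mualpha_succ α hb hκ.2 (by omega) hk, h m κ k hκ.2 hk, pow_add, mul_inv]
  ring

lemma S_zero_succ (hb : 2 ≤ b) (h : ∀ m κ k, κ < b → k < b ^ m → ψ (κ * b ^ m + k) = φ m κ * ψ k)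
    (m : ℕ) :
    S b ψ 0 (m + 1) = (1 + ∑ κ ∈ Finset.Ico 1 b, φ m κ) * S b ψ 0 m := by
  unfold S
  rw [S_split m _ hb, add_mul, one_mul]
  congr 1
  rw [Finset.sum_mul]
  apply Finset.sum_congr rfl
  intro κ hκ
  rw [Finset.mem_Ico] at hκ
  rw [Finset.mul_sum]
  apply Finset.sum_congr rfl
  intro k hk
  rw [Finset.mem_range] at hk
  rw [mualpha_alpha_zero, mualpha_alpha_zero, h m κ k hκ.2 hk]
  ring

end S

lemma c_bound {b : ℕ} (hb : 2 ≤ b) (m : ℕ) :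
    ((b : ℝ) ^ (m + 1))⁻¹ * ((b : ℝ) - 1) ≤ (1 / 2) ^ m := by
  have hb' : (2 : ℝ) ≤ b := by exact_mod_cast hb
  have h1 : ((b : ℝ) ^ (m + 1))⁻¹ * ((b : ℝ) - 1) ≤ ((b : ℝ) ^ (m + 1))⁻¹ * b :=
    mul_le_mul_of_nonneg_left (by linarith) (by positivity)
  have h2 : ((b : ℝ) ^ (m + 1))⁻¹ * b = (1 / b) ^ m := by
    rw [one_div, inv_pow, pow_succ]
    field_simp
  rw [h2] at h1
  refine h1.trans ?_
  gcongr

lemma cg_bound {b : ℕ} (hb : 2 ≤ b) (m : ℕ) :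
    ((b : ℝ) ^ (m + 1))⁻¹ * ((b : ℝ) - 1) * (b : ℝ) ^ m ≤ 1 := by
  have hb' : (2 : ℝ) ≤ b := by exact_mod_cast hb
  have h2 : ((b : ℝ) ^ (m + 1))⁻¹ * ((b : ℝ) - 1) * (b : ℝ) ^ m = ((b : ℝ) - 1) / b := by
    rw [pow_succ]
    field_simp
  rw [h2, div_le_one (by linarith)]
  linarith

lemma S_one_bounded {b : ℕ} (hb : 2 ≤ b) (w : ℕ) :
    ∃ B, 0 ≤ B ∧ ∀ m, S b (fun _ => (1 : ℝ)) (w + 2) m ≤ B := by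
  have hb' : (2 : ℝ) ≤ b := by exact_mod_cast hb
  have hℓ : ∑ κ ∈ Finset.Ico 1 b, (1 : ℝ) = b - 1 := by
    simp [Nat.cast_sub (show 1 ≤ b by omega)]
  have hrec : ∀ α m, S b (fun _ => (1 : ℝ)) (α + 1) (m + 1) = S b (fun _ => (1 : ℝ)) (α + 1) m +
      (((b : ℝ) ^ (m + 1))⁻¹ * ((b : ℝ) - 1)) * S b (fun _ => (1 : ℝ)) α m := by
    intro α m
    rw [S_succ (fun _ => (1 : ℝ)) (fun _ _ => 1) hb (by simp), hℓ]
  have h0 : ∀ m, S b (fun _ => (1 : ℝ)) 0 m = (b : ℝ) ^ m := by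
    intro m
    induction m with
    | zero => exact S_m_zero _ rfl _
    | succ m ih =>
      rw [S_zero_succ (fun _ => (1 : ℝ)) (fun _ _ => 1) hb (by simp), hℓ, ih]
      ring
  have hnn : ∀ α m, 0 ≤ S b (fun _ => (1 : ℝ)) α m := by
    intro α m
    exact Finset.sum_nonneg fun _ _ => by positivity
  induction w with
  | zero =>
    refine bound_rec _ _ (fun m => ((b : ℝ) ^ m)⁻¹ * ((b : ℝ) - 1)) (hrec 1) (c_bound hb)
      (hnn 1) ?_
    apply linear_of_step
    · intro m
      rw [hrec, h0]
      linarith [cg_bound hb m]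
    · exact (S_m_zero _ rfl _).le
  | succ w ih =>
    exact bound_rec _ _ (fun m => ((b : ℝ) ^ m)⁻¹ * ((b : ℝ) - 1)) (hrec (w + 2)) (c_bound hb)
      (hnn _) (linear_of_bounded _ ih)

/-! ### Characters -/

lemma W_eq {b k N : ℕ} (hb : 2 ≤ b) (hk : k < b ^ N) (y : ℕ → ZMod b) :
    W b k y = Complex.exp (2 * Real.pi * Complex.I / b) ^
      ∑ i ∈ Finset.range N, digit b k i * (y i).val := by
  unfold W
  congr 1
  have h1 : ∑ i ∈ Finset.range (k + 1), digit b k i * (y i).val =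
      ∑ i ∈ Finset.range (k + 1 + N), digit b k i * (y i).val := by
    apply Finset.sum_subset (Finset.range_mono (by omega))
    intro i _ hi
    by_cases h : digit b k i = 0
    · simp [h]
    · exact absurd (Finset.mem_range.mpr (lt_of_digit_ne hb h)) hi
  have h2 : ∑ i ∈ Finset.range N, digit b k i * (y i).val =
      ∑ i ∈ Finset.range (k + 1 + N), digit b k i * (y i).val := by
    apply Finset.sum_subset (Finset.range_mono (by omega))
    intro i _ hi
    rw [Finset.mem_range, not_lt] at hi
    rw [digit_zero_of_lt (hk.trans_le (Nat.pow_le_pow_right (by omega) hi)), zero_mul]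
  rw [h1, h2]

lemma W_zero (b : ℕ) (y : ℕ → ZMod b) : W b 0 y = 1 := by
  simp [W, digit]

lemma W_rec {b : ℕ} (hb : 2 ≤ b) (y : ℕ → ZMod b) (m κ k : ℕ) (hκ : κ < b) (hk : k < b ^ m) :
    W b (κ * b ^ m + k) y =
      Complex.exp (2 * Real.pi * Complex.I / b) ^ (κ * (y m).val) * W b k y := by
  rw [W_eq hb (lt_pow_succ hκ hk), W_eq hb hk, Finset.sum_range_succ, digit_top hb hκ hk, pow_add,
    mul_comm]
  congr 2
  apply Finset.sum_congr rfl
  intro i hi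
  rw [digit_low hb (Finset.mem_range.mp hi)]

lemma norm_omega (b : ℕ) : ‖Complex.exp (2 * Real.pi * Complex.I / b)‖ = 1 := by
  have : (2 * Real.pi * Complex.I / b : ℂ) = ((2 * Real.pi / b : ℝ) : ℂ) * Complex.I := by
    push_cast
    ring
  rw [this, Complex.norm_exp_ofReal_mul_I]

lemma norm_W (b k : ℕ) (y : ℕ → ZMod b) : ‖W b k y‖ = 1 := by
  rw [W, norm_pow, norm_omega, one_pow]

lemma char_sum {b : ℕ} (hb : 2 ≤ b) (x : ZMod b) :
    ∑ κ ∈ Finset.Ico 1 b, Complex.exp (2 * Real.pi * Complex.I / b) ^ (κ * x.val) =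
      if x = 0 then (b : ℂ) - 1 else -1 := by
  have : NeZero b := ⟨by omega⟩
  have hprim := Complex.isPrimitiveRoot_exp b (by omega)
  split_ifs with h
  · subst h
    simp [Nat.cast_sub (show 1 ≤ b by omega)]
  · set ω := Complex.exp (2 * Real.pi * Complex.I / b)
    have hx : x.val ≠ 0 := by
      rwa [Ne, ZMod.val_eq_zero]
    have hne : ω ^ x.val ≠ 1 := hprim.pow_ne_one_of_pos_of_lt hx (ZMod.val_lt x)
    have hg : ∑ κ ∈ Finset.range b, (ω ^ x.val) ^ κ = 0 := by
      rw [geom_sum_eq hne, ← pow_mul, mul_comm, pow_mul, hprim.pow_eq_one]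
      simp
    rw [Finset.range_eq_Ico, Finset.sum_eq_sum_Ico_succ_bot (by omega)] at hg
    have : ∑ κ ∈ Finset.Ico 1 b, ω ^ (κ * x.val) = ∑ κ ∈ Finset.Ico (0 + 1) b, (ω ^ x.val) ^ κ := by
      apply Finset.sum_congr rfl
      intro κ _
      rw [← pow_mul, mul_comm]
    rw [this]
    simp only [pow_zero] at hg
    linear_combination hg

/-! ### Tuple exhaustion -/

/-- bounded tuples as elements of `DecTuple`. -/
noncomputable def DT (v m : ℕ) : Finset (DecTuple v) :=
  (D v m).subtype (fun a => StrictAnti a ∧ ∀ i, 0 < a i)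

lemma sum_DT {R : Type*} [AddCommMonoid R] (v m : ℕ) (F : (Fin v → ℕ) → R) :
    ∑ a ∈ DT v m, F a.1 = ∑ a ∈ D v m, F a :=
  Finset.sum_subtype_of_mem F (fun a ha => ((mem_D v m a).mp ha).1)

lemma mem_DT (v m : ℕ) (a : DecTuple v) : a ∈ DT v m ↔ ∀ i, a.1 i ≤ m := by
  have : a ∈ DT v m ↔ a.1 ∈ D v m := Finset.mem_subtype
  rw [this, mem_D]
  exact ⟨fun h => h.2, fun h => ⟨a.2, h⟩⟩

lemma tendsto_DT (v : ℕ) : Filter.Tendsto (DT v) Filter.atTop Filter.atTop := by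
  apply Filter.tendsto_atTop_finset_of_monotone
  · intro m m' h a ha
    rw [mem_DT] at ha ⊢
    exact fun i => (ha i).trans h
  · intro a
    refine ⟨∑ i, a.1 i, ?_⟩
    rw [mem_DT]
    intro i
    exact Finset.single_le_sum (f := a.1) (fun _ _ => Nat.zero_le _) (Finset.mem_univ i)

lemma tendsto_T (c : ℕ → ℂ) (hc : ∀ m, ‖c (m + 1)‖ ≤ (1 / 2) ^ m) (v : ℕ) :
    Filter.Tendsto (T c v) Filter.atTop (nhds (∑' a : DecTuple v, ∏ i, c (a.1 i))) := by
  obtain ⟨B, _, hB⟩ := T_bounded (fun m => ‖c m‖) (fun _ => norm_nonneg _) hc v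
  have := hasSum_exhaust (DT v) (tendsto_DT v) (fun a => ∏ i, c (a.1 i)) B (by
    intro m
    refine le_trans (le_of_eq ?_) (hB m)
    rw [sum_DT v m (fun a => ‖∏ i, c (a i)‖)]
    simp [T, norm_prod])
  refine this.congr ?_
  intro m
  exact sum_DT v m (fun a => ∏ i, c (a i))

lemma tendsto_U (g c : ℕ → ℂ) (hc : ∀ m, ‖c (m + 1)‖ ≤ (1 / 2) ^ m)
    (hgc : ∀ m, ‖c (m + 1)‖ * ‖g (m + 1)‖ ≤ 1) (w : ℕ) :
    Filter.Tendsto (U g c (w + 1)) Filter.atTop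
      (nhds (∑' a : DecTuple (w + 2), g (a.1 (Fin.last (w + 1))) * ∏ i, c (a.1 i))) := by
  obtain ⟨B, _, hB⟩ := U_bounded (fun m => ‖g m‖) (fun m => ‖c m‖) (fun _ => norm_nonneg _) hc
    (fun _ => norm_nonneg _) hgc w
  have := hasSum_exhaust (DT (w + 2)) (tendsto_DT _)
    (fun a => g (a.1 (Fin.last (w + 1))) * ∏ i, c (a.1 i)) B (by
    intro m
    refine le_trans (le_of_eq ?_) (hB m)
    rw [sum_DT (w + 2) m (fun a => ‖g (a (Fin.last (w + 1))) * ∏ i, c (a i)‖)]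
    simp [U, norm_prod])
  refine this.congr ?_
  intro m
  exact sum_DT (w + 2) m (fun a => g (a (Fin.last (w + 1))) * ∏ i, c (a i))

lemma tendsto_chi {b : ℕ} (hb : 2 ≤ b) (w : ℕ) (y : ℕ → ZMod b) :
    Filter.Tendsto (fun m => S b (fun k => W b k y) (w + 2) m - 1) Filter.atTop
      (nhds (chi b (w + 2) y)) := by
  obtain ⟨B, _, hB⟩ := S_one_bounded hb w
  have hsucc : ∀ m, b ^ m = (b ^ m - 1) + 1 := by
    intro m
    have : 0 < b ^ m := by positivity
    omega
  have := hasSum_exhaust (fun m => Finset.range (b ^ m - 1)) (by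
      apply Filter.tendsto_atTop_finset_of_monotone
      · intro m m' h
        apply Finset.range_mono
        have : b ^ m ≤ b ^ m' := Nat.pow_le_pow_right (by omega) h
        omega
      · intro k
        refine ⟨k + 1, ?_⟩
        rw [Finset.mem_range]
        have : k + 1 < b ^ (k + 1) := Nat.lt_pow_self (by omega)
        omega)
    (fun k => ((b : ℂ) ^ mualpha b (w + 2) (k + 1))⁻¹ * W b (k + 1) y) B (by
      intro m
      refine le_trans ?_ (hB m)
      unfold S
      rw [hsucc m, Finset.sum_range_succ']
      simp [norm_W])
  refine this.congr ?_
  intro m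
  unfold S
  conv_rhs => rw [hsucc m, Finset.sum_range_succ']
  simp [W_zero, mualpha_zero]

/-- Explicit formula for `χ_b(Φ_b(z))` for a finitely supported `z ≠ 0`. -/
theorem chi_tent_eq (b α : ℕ) (hb : 2 ≤ b) (hα : 2 ≤ α) (z : ℕ → ZMod b) (n : ℕ)
    (hfin : ∀ i, n ≤ i → z i = 0) (hnz : ∃ i, z i ≠ 0) :
    chi b α (tent b z) =
      (∑ v ∈ Finset.Icc 1 (α - 1), ∑' a : DecTuple v,
        ∏ i, ((b : ℂ) ^ a.1 i)⁻¹ * L b z (a.1 i + 1)) +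
      ∑' a : DecTuple α,
        ((b : ℂ) ^ (a.1 ⟨α - 1, by omega⟩ - 1)) *
          (if ∀ i < a.1 ⟨α - 1, by omega⟩ - 1, tent b z i = 0 then 1 else 0) *
          ∏ i, ((b : ℂ) ^ a.1 i)⁻¹ * L b z (a.1 i + 1) := by
  obtain ⟨w, rfl⟩ : ∃ w, α = w + 2 := ⟨α - 2, by omega⟩
  have hb' : (2 : ℝ) ≤ b := by exact_mod_cast hb
  set c : ℕ → ℂ := fun a => ((b : ℂ) ^ a)⁻¹ * L b z (a + 1) with hcdef
  set g : ℕ → ℂ := fun a => ((b : ℂ) ^ (a - 1)) *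
    (if ∀ i < a - 1, tent b z i = 0 then 1 else 0) with hgdef
  have hL : ∀ m, L b z (m + 2) = ∑ κ ∈ Finset.Ico 1 b,
      Complex.exp (2 * Real.pi * Complex.I / b) ^ (κ * (tent b z m).val) := by
    intro m
    rw [char_sum hb]
    simp [L, tent, sub_eq_zero]
  have hLn : ∀ m, ‖L b z m‖ ≤ (b : ℝ) - 1 := by
    intro m
    unfold L
    split_ifs
    · have : (b : ℂ) - 1 = (((b : ℝ) - 1 : ℝ) : ℂ) := by
        push_cast
        ring
      rw [this, Complex.norm_real, Real.norm_of_nonneg (by linarith)]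
    · simp
      linarith
  have hcn : ∀ m, ‖c m‖ ≤ ((b : ℝ) ^ m)⁻¹ * ((b : ℝ) - 1) := by
    intro m
    simp only [hcdef, norm_mul, norm_inv, norm_pow, Complex.norm_natCast]
    exact mul_le_mul_of_nonneg_left (hLn _) (by positivity)
  have hgn : ∀ m, ‖g (m + 1)‖ ≤ (b : ℝ) ^ m := by
    intro m
    simp only [hgdef, norm_mul, norm_pow, Complex.norm_natCast, Nat.add_sub_cancel]
    split_ifs
    · simp
    · simp
  have hc : ∀ m, ‖c (m + 1)‖ ≤ (1 / 2) ^ m := fun m => (hcn _).trans (c_bound hb m)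
  have hgc : ∀ m, ‖c (m + 1)‖ * ‖g (m + 1)‖ ≤ 1 := by
    intro m
    refine le_trans (mul_le_mul (hcn _) (hgn m) (norm_nonneg _) ?_) (cg_bound hb m)
    exact mul_nonneg (by positivity) (by linarith)
  have hS0 : ∀ m, S b (fun k => W b k (tent b z)) 0 m = g (m + 1) := by
    intro m
    induction m with
    | zero =>
      rw [S_m_zero _ (W_zero _ _)]
      simp [hgdef]
    | succ m ih =>
      rw [S_zero_succ _ _ hb (W_rec hb (tent b z)), ih, char_sum hb]
      simp only [hgdef, Nat.add_sub_cancel, Nat.forall_lt_succ_right]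
      by_cases h1 : tent b z m = 0 <;> by_cases h2 : ∀ i < m, tent b z i = 0
      · simp only [h1, if_true, and_true, if_pos h2]
        ring
      · simp only [h1, if_true, and_true, if_neg h2]
        ring
      · simp [h1]
      · simp [h1]
  have hS : ∀ m, S b (fun k => W b k (tent b z)) (w + 2) m - 1 =
      ∑ v ∈ Finset.Icc 1 (w + 1), T c v m + U g c (w + 1) m := by
    intro m
    rw [eq_of_rec g c (S b (fun k => W b k (tent b z))) hS0
      (fun w => S_m_zero _ (W_zero _ _) _) (fun w m => by
        rw [S_succ _ _ hb (W_rec hb (tent b z)), ← hL]) (w + 1) m]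
    rw [Finset.range_eq_Ico, Finset.sum_eq_sum_Ico_succ_bot (by omega), T_zero]
    have : Finset.Ico (0 + 1) (w + 1 + 1) = Finset.Icc 1 (w + 1) := by
      ext i
      simp only [Finset.mem_Ico, Finset.mem_Icc]
      omega
    rw [this]
    ring
  have h1 := (tendsto_chi hb w (tent b z)).congr hS
  have h2 := (tendsto_finsetSum (Finset.Icc 1 (w + 1)) (fun v _ => tendsto_T c hc v)).add
    (tendsto_U g c hc hgc w)
  refine (tendsto_nhds_unique h1 h2).trans ?_
  congr 1
  apply tsum_congr
  intro a
  have hlast : (⟨w + 2 - 1, by omega⟩ : Fin (w + 2)) = Fin.last (w + 1) := rfl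
  simp only [hgdef, hcdef, hlast]

end QMC
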